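/- arXiv:2507.08056 — 2 statements merged into one kernel-verified Lean document; each statement's English description precedes it below -/
import Mathlib

section
/- Let β ≠ 0 and Ω_{0m}, Ω_{0r} ∈ ℝ. Suppose E : (−1, ∞) → ℝ is differentiable, strictly positive, and satisfies β²·E(z)² = Ω_{0m}[(1+z)³ − 1] + (3Ω_{0r}/4)[(1+z)⁴ − 1] + β² for all z > −1. Then for every z > −1 the deceleration parameter q(z) := −1 + (1+z)·E'(z)/E(z) equals (1/(2E(z)²))·[ (3Ω_{0m}/β²)(1+z)³ + (3Ω_{0r}/β²)(1+z)⁴ ] − 1. -/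
/-- For a positive differentiable E on (−1, ∞) satisfying the modified Friedmann
equation, the deceleration parameter q(z) = −1 + (1+z)E'(z)/E(z) equals
(1/(2E²))[(3Ω₀m/β²)(1+z)³ + (3Ω₀r/β²)(1+z)⁴] − 1. -/
theorem deceleration_parameter_formula (β Ω₀m Ω₀r : ℝ) (hβ : β ≠ 0)
    (E E' : ℝ → ℝ) (hE' : ∀ z : ℝ, z > -1 → HasDerivAt E (E' z) z)
    (hEpos : ∀ z : ℝ, z > -1 → 0 < E z)
    (heq : ∀ z : ℝ, z > -1 →
      β ^ 2 * (E z) ^ 2 =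
        Ω₀m * ((1 + z) ^ 3 - 1) + (3 * Ω₀r / 4) * ((1 + z) ^ 4 - 1) + β ^ 2) :
    ∀ z : ℝ, z > -1 →
      -1 + (1 + z) * E' z / E z =
        (1 / (2 * (E z) ^ 2)) *
          ((3 * Ω₀m / β ^ 2) * (1 + z) ^ 3 + (3 * Ω₀r / β ^ 2) * (1 + z) ^ 4) - 1 := by
  intro z hz
  have hE := (hEpos z hz).ne'
  have h1 : HasDerivAt (fun x => β ^ 2 * (E x) ^ 2) (β ^ 2 * (2 * E z * E' z)) z := by
    have := ((hE' z hz).pow 2).const_mul (β ^ 2)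
    refine HasDerivAt.congr_deriv this ?_
    push_cast
    ring
  have hl : HasDerivAt (fun x : ℝ => 1 + x) 1 z := (hasDerivAt_id z).const_add 1
  have h2 : HasDerivAt (fun x : ℝ =>
      Ω₀m * ((1 + x) ^ 3 - 1) + (3 * Ω₀r / 4) * ((1 + x) ^ 4 - 1) + β ^ 2)
      (3 * Ω₀m * (1 + z) ^ 2 + 3 * Ω₀r * (1 + z) ^ 3) z := by
    have := ((((hl.pow 3).sub_const 1).const_mul Ω₀m).add
      (((hl.pow 4).sub_const 1).const_mul (3 * Ω₀r / 4))).add_const (β ^ 2)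
    refine HasDerivAt.congr_deriv this ?_
    push_cast
    ring
  have h3 := h1.congr_of_eventuallyEq
    (f₁ := fun x : ℝ =>
      Ω₀m * ((1 + x) ^ 3 - 1) + (3 * Ω₀r / 4) * ((1 + x) ^ 4 - 1) + β ^ 2)
    (by filter_upwards [lt_mem_nhds hz] with x hx using (heq x hx).symm)
  have h4 := h3.unique h2
  have h5 : (1 + z) * E' z / E z = (1 / (2 * (E z) ^ 2)) *
      ((3 * Ω₀m / β ^ 2) * (1 + z) ^ 3 + (3 * Ω₀r / β ^ 2) * (1 + z) ^ 4) := by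
    field_simp
    linear_combination (1 + z) * h4
  rw [h5]
  ring
end

section
/- Let β, Ω_{0m} ∈ ℝ with 0 < Ω_{0m} < β², set Ω_{0r} = 0, and define on (−1, ∞) the functions E(z)² = ( Ω_{0m}[(1+z)³ − 1] + β² ) / β² and q(z) = (3Ω_{0m}/(2β²))·(1+z)³/E(z)² − 1. Then z_T = ( 2(β² − Ω_{0m})/Ω_{0m} )^{1/3} − 1 satisfies q(z_T) = 0, and z_T is the unique zero of q on (−1, ∞). Moreover q(z) < 0 for −1 < z < z_T and q(z) > 0 for z > z_T. -/
open Set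

/-- With radiation neglected (Ω₀r = 0) and 0 < Ω₀m < β², the transition redshift
z_T = (2(β² − Ω₀m)/Ω₀m)^{1/3} − 1 is the unique zero of the deceleration
parameter q on (−1, ∞); moreover q < 0 below z_T and q > 0 above z_T. -/
theorem transition_redshift (β Ω₀m : ℝ) (hΩm : 0 < Ω₀m) (hΩmβ : Ω₀m < β ^ 2)
    (E2 : ℝ → ℝ) (hE2 : ∀ z : ℝ, E2 z = (Ω₀m * ((1 + z) ^ 3 - 1) + β ^ 2) / β ^ 2)
    (q : ℝ → ℝ)
    (hq : ∀ z : ℝ, q z = (3 * Ω₀m / (2 * β ^ 2)) * (1 + z) ^ 3 / E2 z - 1)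
    (zT : ℝ) (hzT : zT = (2 * (β ^ 2 - Ω₀m) / Ω₀m) ^ ((1 : ℝ) / 3) - 1) :
    q zT = 0 ∧
    (∀ z : ℝ, z > -1 → q z = 0 → z = zT) ∧
    (∀ z ∈ Ioo (-1 : ℝ) zT, q z < 0) ∧
    (∀ z : ℝ, z > zT → 0 < q z) := by
  have hA : 0 < 2 * (β ^ 2 - Ω₀m) / Ω₀m := by
    apply div_pos _ hΩm
    linarith
  have hu : 0 < 1 + zT := by
    have := Real.rpow_pos_of_pos hA ((1 : ℝ) / 3)
    linarith
  have hu3 : (1 + zT) ^ 3 = 2 * (β ^ 2 - Ω₀m) / Ω₀m := by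
    have h1 : 1 + zT = (2 * (β ^ 2 - Ω₀m) / Ω₀m) ^ ((1 : ℝ) / 3) := by linarith
    rw [h1, ← Real.rpow_natCast, ← Real.rpow_mul hA.le]
    norm_num
  have hc : Ω₀m * (1 + zT) ^ 3 = 2 * (β ^ 2 - Ω₀m) := by
    rw [hu3]
    field_simp
  have hβ : 0 < β ^ 2 := by linarith
  have hD : ∀ z : ℝ, -1 < z → 0 < Ω₀m * ((1 + z) ^ 3 - 1) + β ^ 2 := by
    intro z hz
    have h1 : 0 < 1 + z := by linarith
    have h2 : 0 < Ω₀m * (1 + z) ^ 3 := by positivity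
    linarith
  have key : ∀ z : ℝ, -1 < z →
      q z = Ω₀m * ((1 + z) ^ 3 - (1 + zT) ^ 3) / (2 * (Ω₀m * ((1 + z) ^ 3 - 1) + β ^ 2)) := by
    intro z hz
    have hd := (hD z hz).ne'
    have hb := hβ.ne'
    have hb' : β ≠ 0 := by
      rintro rfl
      simp at hb
    rw [mul_sub, hc, hq, hE2, eq_div_iff (by positivity)]
    generalize hDD : Ω₀m * ((1 + z) ^ 3 - 1) + β ^ 2 = D at hd ⊢
    have h5 : 3 * Ω₀m / (2 * β ^ 2) * (1 + z) ^ 3 / (D / β ^ 2) = 3 * Ω₀m * (1 + z) ^ 3 / (2 * D) := by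
      field_simp
    rw [h5, sub_mul, div_mul_cancel₀ _ (by positivity), ← hDD]
    ring
  have neg : ∀ z ∈ Ioo (-1 : ℝ) zT, q z < 0 := by
    rintro z ⟨h1, h2⟩
    rw [key z h1]
    have h3 : (1 + z) ^ 3 < (1 + zT) ^ 3 :=
      pow_lt_pow_left₀ (by linarith) (by linarith) (by norm_num)
    exact div_neg_of_neg_of_pos (mul_neg_of_pos_of_neg hΩm (by linarith))
      (by linarith [hD z h1])
  have pos : ∀ z : ℝ, z > zT → 0 < q z := by
    intro z h2
    have h1 : -1 < z := by linarith
    rw [key z h1]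
    have h3 : (1 + zT) ^ 3 < (1 + z) ^ 3 :=
      pow_lt_pow_left₀ (by linarith) (by linarith) (by norm_num)
    exact div_pos (mul_pos hΩm (by linarith)) (by linarith [hD z h1])
  refine ⟨?_, ?_, neg, pos⟩
  · rw [key zT (by linarith)]
    simp
  · intro z hz h0
    rcases lt_trichotomy z zT with h | h | h
    · linarith [neg z ⟨hz, h⟩]
    · exact h
    · linarith [pos z h]
end
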